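/- Let E = (E;⊕,',0,1) be a lattice effect algebra and define x·y := ((x'∧y)⊕y')' for all x,y ∈ E. Then ℝ(E) := (E;·,',0,1) is an effect groupoid, i.e., it satisfies all of the conditions (NG0)–(NG8). -/

import Mathlib

/-- An effect algebra: a partial algebra (E;⊕,',0,1). The partial operation ⊕ is
modeled by a definedness predicate `D` together with a total function `add` whose
value is only meaningful on defined pairs. -/
structure EffectAlgebra (E : Type*) where
  /-- definedness of `x ⊕ y` -/
  D : E → E → Prop
  /-- the value of `x ⊕ y` (meaningful only when `D x y`) -/
  add : E → E → E
  zero : E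
  one : E
  /-- the complement `x'` -/
  compl : E → E
  /-- (E1) commutativity -/
  E1 : ∀ x y, D x y → D y x ∧ add x y = add y x
  /-- (E2) associativity -/
  E2 : ∀ x y z, D x y → D (add x y) z →
    D y z ∧ D x (add y z) ∧ add (add x y) z = add x (add y z)
  /-- (E3) existence of the complement -/
  E3a : ∀ x, D x (compl x)
  E3b : ∀ x, add x (compl x) = one
  /-- (E3) uniqueness of the complement -/
  E3c : ∀ x y, D x y → add x y = one → y = compl x
  /-- (E4) -/
  E4 : ∀ x, D x one → x = zero

/-- The induced order of an effect algebra: `a ≤ b` iff `a ⊕ c = b` for some `c`. -/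
def EffectAlgebra.le {E : Type*} (A : EffectAlgebra E) (a b : E) : Prop :=
  ∃ c, A.D a c ∧ A.add a c = b

/-- A lattice effect algebra: an effect algebra whose induced order is a lattice,
with meet `inf` and join `sup`. -/
structure LatticeEffectAlgebra (E : Type*) extends EffectAlgebra E where
  inf : E → E → E
  sup : E → E → E
  inf_le_left : ∀ a b, toEffectAlgebra.le (inf a b) a
  inf_le_right : ∀ a b, toEffectAlgebra.le (inf a b) b
  le_inf : ∀ a b c, toEffectAlgebra.le c a → toEffectAlgebra.le c b →
    toEffectAlgebra.le c (inf a b)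
  le_sup_left : ∀ a b, toEffectAlgebra.le a (sup a b)
  le_sup_right : ∀ a b, toEffectAlgebra.le b (sup a b)
  sup_le : ∀ a b c, toEffectAlgebra.le a c → toEffectAlgebra.le b c →
    toEffectAlgebra.le (sup a b) c

/-- The total operation `x·y := ((x'∧y)⊕y')'` on a lattice effect algebra
(well defined since `x'∧y ≤ y`). -/
def LatticeEffectAlgebra.prod {E : Type*} (A : LatticeEffectAlgebra E) (x y : E) : E :=
  A.compl (A.add (A.inf (A.compl x) y) (A.compl y))

/-- An effect groupoid: an algebra (R;·,',0,1) of type (2,1,0,0) satisfying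
(NG0)–(NG8). -/
structure EffectGroupoid (R : Type*) where
  mul : R → R → R
  compl : R → R
  zero : R
  one : R
  /-- (NG0) -/
  ng0l : ∀ x, mul one x = x
  ng0r : ∀ x, mul x one = x
  /-- (NG1) -/
  ng1 : ∀ x, compl (compl x) = x
  /-- (NG2) -/
  ng2l : ∀ x, mul zero x = zero
  ng2r : ∀ x, mul x zero = zero
  /-- (NG3) -/
  ng3 : compl zero = one
  /-- (NG4) -/
  ng4l : ∀ x y, mul x (mul y (compl x)) = zero
  ng4r : ∀ x y, mul (mul y (compl x)) x = zero
  /-- (NG5) -/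
  ng5 : ∀ x y, mul x y =
    mul y (compl (mul (compl (mul (compl y) (compl x))) (compl x)))
  /-- (NG6) -/
  ng6a : ∀ x y, mul x (compl (mul (compl y) x)) = mul (compl (mul (compl y) x)) x
  ng6b : ∀ x y, mul (compl (mul (compl y) x)) x = mul (compl (mul (compl x) y)) y
  /-- (NG7) -/
  ng7 : ∀ x y z,
    mul (compl (mul (compl (mul x (compl y))) (compl y))) z =
    compl (mul (compl (mul (mul x z) (compl (mul y z)))) (compl (mul y z)))
  /-- (NG8) -/
  ng8 : ∀ x y z, mul (compl x) (compl y) = zero →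
    mul (compl (mul x y)) (compl z) = zero →
    mul (compl y) (compl z) = zero ∧
    mul (compl x) (compl (mul y z)) = zero ∧
    mul (mul x y) z = mul x (mul y z)

/-!
On each interval `[0, c]` of an effect algebra the difference `a ↦ c ⊖ a` is an antitone
involution, and `x · y = y ⊖ (x' ∧ y)`. Hence `(x · y)' · y = x' ∧ y`, so the composite terms in
(NG5)–(NG7) denote meets and joins: (NG5) and (NG6) express that meets commute and that
`y ⊖ (y ⊖ a) = a`, and (NG7) is the distributive law `(x ∨ y) · z = x · z ∨ y · z`, which holds
because `z ⊖ ·` exchanges meets and joins. Moreover `x · y = 0` exactly when `x ⊕ y` is defined, and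
`x · y = (x' ⊕ y')'` whenever `x' ⊕ y'` is defined, so (NG8) is the associativity (E2) of `⊕`.
-/

namespace EffectAlgebra

variable {E : Type*} (A : EffectAlgebra E) {a b c : E}

theorem D_comm : A.D a b ↔ A.D b a :=
  ⟨fun h => (A.E1 a b h).1, fun h => (A.E1 b a h).1⟩

protected theorem add_comm (h : A.D a b) : A.add a b = A.add b a :=
  (A.E1 a b h).2

protected theorem compl_compl (a : E) : A.compl (A.compl a) = a := by
  have hD := A.E3a a
  have hadd : A.add (A.compl a) a = A.one := by rw [← A.add_comm hD, A.E3b]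
  exact (A.E3c _ _ (A.D_comm.1 hD) hadd).symm

theorem compl_one : A.compl A.one = A.zero :=
  A.E4 _ (A.D_comm.1 (A.E3a A.one))

theorem compl_zero : A.compl A.zero = A.one := by
  rw [← A.compl_one, A.compl_compl]

theorem D_compl_add (h : A.D a b) : A.D b (A.compl (A.add a b)) :=
  (A.E2 _ _ _ h (A.E3a _)).1

theorem add_compl_add (h : A.D a b) : A.add b (A.compl (A.add a b)) = A.compl a := by
  obtain ⟨-, hD, hassoc⟩ := A.E2 _ _ _ h (A.E3a _)
  exact A.E3c _ _ hD (by rw [← hassoc, A.E3b])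

theorem D_zero (a : E) : A.D a A.zero := by
  have hD := A.D_comm.1 (A.E3a a)
  simpa only [← A.add_comm (A.E3a a), A.E3b, A.compl_one] using A.D_compl_add hD

protected theorem add_zero (a : E) : A.add a A.zero = a := by
  have hD := A.D_comm.1 (A.E3a a)
  simpa only [← A.add_comm (A.E3a a), A.E3b, A.compl_one, A.compl_compl]
    using A.add_compl_add hD

protected theorem add_left_cancel (hab : A.D a b) (hac : A.D a c)
    (h : A.add a b = A.add a c) : b = c := by
  have hba := A.add_compl_add (A.D_comm.1 hab)
  have hca := A.add_compl_add (A.D_comm.1 hac)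
  rw [← A.add_comm hab] at hba
  rw [← A.add_comm hac] at hca
  rw [← A.compl_compl b, ← hba, h, hca, A.compl_compl]

theorem D_iff_le_compl : A.D a b ↔ A.le a (A.compl b) := by
  constructor
  · intro h
    have hba := A.D_comm.1 h
    exact ⟨_, A.D_compl_add hba, A.add_compl_add hba⟩
  · rintro ⟨c, hac, hadd⟩
    have hD : A.D (A.add c a) b := by
      rw [← A.add_comm hac, hadd]
      exact A.D_comm.1 (A.E3a b)
    exact (A.E2 _ _ _ (A.D_comm.1 hac) hD).1

theorem le_iff_D_compl : A.le a b ↔ A.D a (A.compl b) := by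
  rw [D_iff_le_compl, A.compl_compl]

protected theorem compl_le_compl_iff : A.le (A.compl b) (A.compl a) ↔ A.le a b := by
  rw [← D_iff_le_compl, D_comm, ← le_iff_D_compl]

protected theorem le_refl (a : E) : A.le a a :=
  ⟨A.zero, A.D_zero a, A.add_zero a⟩

variable {A} in
protected theorem le.trans (hab : A.le a b) (hbc : A.le b c) : A.le a c := by
  obtain ⟨d, had, rfl⟩ := hab
  obtain ⟨e, hade, rfl⟩ := hbc
  obtain ⟨-, hD, hassoc⟩ := A.E2 _ _ _ had hade
  exact ⟨_, hD, hassoc.symm⟩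

protected theorem zero_le (a : E) : A.le A.zero a :=
  ⟨a, A.D_comm.1 (A.D_zero a), by rw [← A.add_comm (A.D_zero a), A.add_zero]⟩

protected theorem le_one (a : E) : A.le a A.one :=
  ⟨A.compl a, A.E3a a, A.E3b a⟩

theorem eq_zero_of_le_zero (h : A.le a A.zero) : a = A.zero := by
  rw [le_iff_D_compl, A.compl_zero] at h
  exact A.E4 a h

variable {A} in
protected theorem le.antisymm (hab : A.le a b) (hba : A.le b a) : a = b := by
  obtain ⟨d, had, rfl⟩ := hab
  obtain ⟨e, hade, hadd⟩ := hba
  obtain ⟨hde, hD, hassoc⟩ := A.E2 _ _ _ had hade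
  have hde_zero : A.add d e = A.zero :=
    A.add_left_cancel hD (A.D_zero a) (by rw [← hassoc, hadd, A.add_zero])
  have hd_zero : d = A.zero := A.eq_zero_of_le_zero ⟨e, hde, hde_zero⟩
  rw [hd_zero, A.add_zero]

protected theorem add_le_add_right (hab : A.le a b) (hbc : A.D b c) :
    A.le (A.add a c) (A.add b c) := by
  obtain ⟨d, had, rfl⟩ := hab
  rw [A.add_comm had] at hbc ⊢
  obtain ⟨-, hD, hassoc⟩ := A.E2 _ _ _ (A.D_comm.1 had) hbc
  exact ⟨d, A.D_comm.1 hD, by rw [hassoc, A.add_comm hD]⟩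

/-- The difference `b ⊖ a = (a ⊕ b')'`, meaningful only when `a ≤ b`. -/
def diff (b a : E) : E := A.compl (A.add a (A.compl b))

theorem diff_self (a : E) : A.diff a a = A.zero := by
  rw [diff, A.E3b, A.compl_one]

theorem one_diff (a : E) : A.diff A.one a = A.compl a := by
  rw [diff, A.compl_one, A.add_zero]

theorem diff_le (h : A.le a b) : A.le (A.diff b a) b := by
  rw [← A.compl_le_compl_iff, diff, A.compl_compl]
  have hD := A.le_iff_D_compl.1 h
  exact ⟨a, A.D_comm.1 hD, (A.add_comm hD).symm⟩

theorem diff_diff (h : A.le a b) : A.diff b (A.diff b a) = a := by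
  have hD := A.le_iff_D_compl.1 h
  rw [diff, diff, ← A.add_comm (A.D_compl_add hD), A.add_compl_add hD, A.compl_compl]

theorem diff_zero (a : E) : A.diff a A.zero = a := by
  rw [← A.diff_self a, A.diff_diff (A.le_refl a)]

theorem diff_eq_zero_iff (h : A.le a b) : A.diff b a = A.zero ↔ a = b := by
  constructor
  · intro hzero
    rw [← A.diff_diff h, hzero, A.diff_zero]
  · rintro rfl
    exact A.diff_self a

theorem compl_diff_compl (h : A.le a b) : A.diff (A.compl a) (A.compl b) = A.diff b a := by
  rw [diff, diff, A.compl_compl, A.add_comm (A.le_iff_D_compl.1 h)]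

theorem diff_le_diff (hab : A.le a b) (hbc : A.le b c) : A.le (A.diff c b) (A.diff c a) :=
  A.compl_le_compl_iff.2 (A.add_le_add_right hab (A.le_iff_D_compl.1 hbc))

theorem diff_le_of_diff_le (ha : A.le a c) (hb : A.le b c) (h : A.le (A.diff c a) b) :
    A.le (A.diff c b) a := by
  simpa only [A.diff_diff ha] using A.diff_le_diff h hb

end EffectAlgebra

namespace LatticeEffectAlgebra

variable {E : Type*} (A : LatticeEffectAlgebra E) {a b c x y z : E}

/-- The lattice order of a lattice effect algebra, as a Mathlib `Lattice`. It is not an instance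
because `E` does not determine `A`. -/
abbrev toLattice : Lattice E where
  le := A.le
  le_refl := A.le_refl
  le_trans _ _ _ := EffectAlgebra.le.trans
  le_antisymm _ _ := EffectAlgebra.le.antisymm
  inf := A.inf
  inf_le_left := A.inf_le_left
  inf_le_right := A.inf_le_right
  le_inf _ _ _ := A.le_inf _ _ _
  sup := A.sup
  le_sup_left := A.le_sup_left
  le_sup_right := A.le_sup_right
  sup_le _ _ _ := A.sup_le _ _ _

protected theorem inf_comm (a b : E) : A.inf a b = A.inf b a :=
  let _ := A.toLattice
  _root_.inf_comm a b

protected theorem inf_eq_left : A.inf a b = a ↔ A.le a b :=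
  let _ := A.toLattice
  _root_.inf_eq_left

protected theorem inf_eq_right : A.inf a b = b ↔ A.le b a :=
  let _ := A.toLattice
  _root_.inf_eq_right

protected theorem inf_inf_distrib_right (a b c : E) :
    A.inf (A.inf a b) c = A.inf (A.inf a c) (A.inf b c) :=
  let _ := A.toLattice
  _root_.inf_inf_distrib_right a b c

theorem diff_inf (ha : A.le a c) (hb : A.le b c) :
    A.diff c (A.inf a b) = A.sup (A.diff c a) (A.diff c b) := by
  have hinf : A.le (A.inf a b) c := (A.inf_le_left a b).trans ha
  have hsup : A.le (A.sup (A.diff c a) (A.diff c b)) c :=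
    A.sup_le _ _ _ (A.diff_le ha) (A.diff_le hb)
  apply EffectAlgebra.le.antisymm
  · apply A.diff_le_of_diff_le hsup hinf
    exact A.le_inf _ _ _ (A.diff_le_of_diff_le ha hsup (A.le_sup_left _ _))
      (A.diff_le_of_diff_le hb hsup (A.le_sup_right _ _))
  · exact A.sup_le _ _ _ (A.diff_le_diff (A.inf_le_left a b) ha)
      (A.diff_le_diff (A.inf_le_right a b) hb)

theorem compl_inf (a b : E) : A.compl (A.inf a b) = A.sup (A.compl a) (A.compl b) := by
  simpa only [A.one_diff] using A.diff_inf (A.le_one a) (A.le_one b)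

theorem compl_sup (a b : E) : A.compl (A.sup a b) = A.inf (A.compl a) (A.compl b) := by
  rw [← A.compl_compl (A.inf _ _), A.compl_inf, A.compl_compl, A.compl_compl]

theorem prod_eq_diff (x y : E) : A.prod x y = A.diff y (A.inf (A.compl x) y) := rfl

theorem prod_le_right (x y : E) : A.le (A.prod x y) y :=
  A.diff_le (A.inf_le_right _ _)

theorem prod_eq_zero_iff : A.prod x y = A.zero ↔ A.D x y := by
  rw [prod_eq_diff, A.diff_eq_zero_iff (A.inf_le_right _ _), A.inf_eq_right, A.D_comm,
    A.D_iff_le_compl]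

theorem one_prod (x : E) : A.prod A.one x = x := by
  rw [prod_eq_diff, A.compl_one, A.inf_eq_left.2 (A.zero_le x), A.diff_zero]

theorem prod_one (x : E) : A.prod x A.one = x := by
  rw [prod_eq_diff, A.inf_eq_left.2 (A.le_one _), A.one_diff, A.compl_compl]

theorem zero_prod (x : E) : A.prod A.zero x = A.zero :=
  A.prod_eq_zero_iff.2 (A.D_comm.1 (A.D_zero x))

theorem prod_zero (x : E) : A.prod x A.zero = A.zero :=
  A.prod_eq_zero_iff.2 (A.D_zero x)

theorem D_prod_compl (x y : E) : A.D (A.prod y (A.compl x)) x :=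
  A.D_iff_le_compl.2 (A.prod_le_right y (A.compl x))

theorem prod_compl_of_le (h : A.le y x) : A.prod x (A.compl y) = A.diff x y := by
  rw [prod_eq_diff, A.inf_eq_left.2 (A.compl_le_compl_iff.2 h), A.compl_diff_compl h]

theorem compl_prod_prod (x y : E) : A.prod (A.compl (A.prod x y)) y = A.inf (A.compl x) y := by
  rw [prod_eq_diff, A.compl_compl, A.inf_eq_left.2 (A.prod_le_right x y), prod_eq_diff,
    A.diff_diff (A.inf_le_right _ _)]

theorem prod_compl_prod (x y : E) : A.prod y (A.compl (A.prod x y)) = A.inf (A.compl x) y := by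
  rw [A.prod_compl_of_le (A.prod_le_right x y), prod_eq_diff, A.diff_diff (A.inf_le_right _ _)]

theorem prod_compl_inf (x y : E) : A.prod y (A.compl (A.inf (A.compl x) y)) = A.prod x y := by
  rw [A.prod_compl_of_le (A.inf_le_right _ _), prod_eq_diff]

theorem compl_prod_compl_prod_compl (x y : E) :
    A.compl (A.prod (A.compl (A.prod x (A.compl y))) (A.compl y)) = A.sup x y := by
  rw [A.compl_prod_prod, A.compl_inf, A.compl_compl, A.compl_compl]

theorem sup_prod (x y z : E) : A.prod (A.sup x y) z = A.sup (A.prod x z) (A.prod y z) := by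
  rw [prod_eq_diff, A.compl_sup, A.inf_inf_distrib_right,
    A.diff_inf (A.inf_le_right _ _) (A.inf_le_right _ _), prod_eq_diff, prod_eq_diff]

theorem compl_prod_of_D (h : A.D (A.compl x) (A.compl y)) :
    A.compl (A.prod x y) = A.add (A.compl x) (A.compl y) := by
  rw [prod, A.inf_eq_left.2 (A.le_iff_D_compl.2 h), A.compl_compl]

theorem prod_assoc_of_D (hxy : A.D (A.compl x) (A.compl y))
    (hxyz : A.D (A.compl (A.prod x y)) (A.compl z)) :
    A.D (A.compl y) (A.compl z) ∧ A.D (A.compl x) (A.compl (A.prod y z)) ∧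
      A.prod (A.prod x y) z = A.prod x (A.prod y z) := by
  obtain ⟨hyz, hxyz', hassoc⟩ := A.E2 _ _ _ hxy (A.compl_prod_of_D hxy ▸ hxyz)
  rw [← A.compl_prod_of_D hyz] at hxyz'
  have hcompl : A.compl (A.prod (A.prod x y) z) = A.compl (A.prod x (A.prod y z)) := by
    rw [A.compl_prod_of_D hxyz, A.compl_prod_of_D hxy, hassoc, ← A.compl_prod_of_D hyz,
      ← A.compl_prod_of_D hxyz']
  refine ⟨hyz, hxyz', ?_⟩
  rw [← A.compl_compl (A.prod (A.prod x y) z), hcompl, A.compl_compl]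

/-- The effect groupoid `ℝ(E) = (E; ·, ', 0, 1)` of a lattice effect algebra. -/
def toEffectGroupoid : EffectGroupoid E where
  mul := A.prod
  compl := A.compl
  zero := A.zero
  one := A.one
  ng0l := A.one_prod
  ng0r := A.prod_one
  ng1 := A.compl_compl
  ng2l := A.zero_prod
  ng2r := A.prod_zero
  ng3 := A.compl_zero
  ng4l x y := A.prod_eq_zero_iff.2 (A.D_comm.1 (A.D_prod_compl x y))
  ng4r x y := A.prod_eq_zero_iff.2 (A.D_prod_compl x y)
  ng5 x y := by rw [A.compl_prod_prod, A.compl_compl, A.inf_comm, A.prod_compl_inf]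
  ng6a x y := by rw [A.prod_compl_prod, A.compl_prod_prod]
  ng6b x y := by
    rw [A.compl_prod_prod, A.compl_prod_prod, A.compl_compl, A.compl_compl, A.inf_comm]
  ng7 x y z := by
    rw [A.compl_prod_compl_prod_compl, A.compl_prod_compl_prod_compl, A.sup_prod]
  ng8 x y z := by simpa only [A.prod_eq_zero_iff] using A.prod_assoc_of_D

end LatticeEffectAlgebra

/-- For a lattice effect algebra `E` with `x·y := ((x'∧y)⊕y')'`, the structure
`(E;·,',0,1)` is an effect groupoid. -/
theorem latticeEffectAlgebra_to_effectGroupoid {E : Type*} (A : LatticeEffectAlgebra E) :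
    ∃ G : EffectGroupoid E, G.mul = A.prod ∧ G.compl = A.compl ∧
      G.zero = A.zero ∧ G.one = A.one :=
  ⟨A.toEffectGroupoid, rfl, rfl, rfl, rfl⟩
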